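/- arXiv:1712.07385 — 5 statements merged into one kernel-verified Lean document; each statement's English description precedes it below -/
import Mathlib

section
/- Let h : ℝ → ℝ be nondecreasing and bi-Lipschitz with constants 0 < m ≤ M. For every N ≥ 1 and X ∈ ℝ^N, if L(X) > 0 then (1/N)·∑_{i=1}^N h(L(X) + X^i) = 0. -/
open Finset

/-- The constraint set `A(X) = {x ≥ 0 : (1/N)·∑ᵢ h(x + Xⁱ) ≥ 0}`. -/
def reflSet (h : ℝ → ℝ) (N : ℕ) (X : Fin N → ℝ) : Set ℝ :=
  {x : ℝ | 0 ≤ x ∧ 0 ≤ (1 / (N : ℝ)) * ∑ i, h (x + X i)}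

/-- The reflection operator `L(X) = inf A(X)`. -/
noncomputable def Lrefl (h : ℝ → ℝ) (N : ℕ) (X : Fin N → ℝ) : ℝ :=
  sInf (reflSet h N X)

/-!
The constraint function `x ↦ (1/N) ∑ᵢ h (x + Xⁱ)` is continuous, so the infimum `L(X)` of its
superlevel set in `[0, ∞)` belongs to that set. If `L(X) > 0`, every point just to the left of
`L(X)` is nonnegative and violates the constraint, and letting it tend to `L(X)` gives the reverse
inequality. The linear growth of `h` makes the superlevel set nonempty, so that `L(X)` is a true
infimum and not the junk value `sInf ∅ = 0`.
-/

open Filter Set Topology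

section Superlevel

variable {α β : Type*} [LinearOrder α] [TopologicalSpace α] [OrderTopology α]
  [TopologicalSpace β] {f : α → β} {a s : α} {b : β}

theorem le_apply_of_isGLB_superlevel [Preorder β] [OrderClosedTopology β]
    (hf : ContinuousOn f (Ici a)) (hs : IsGLB {x | a ≤ x ∧ b ≤ f x} s)
    (hne : {x | a ≤ x ∧ b ≤ f x}.Nonempty) : b ≤ f s := by
  have hclosed : IsClosed {x | a ≤ x ∧ b ≤ f x} :=
    hf.preimage_isClosed_of_isClosed isClosed_Ici isClosed_Ici
  exact (hs.mem_of_isClosed hne hclosed).2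

theorem apply_le_of_isGLB_superlevel [DenselyOrdered α] [LinearOrder β] [OrderClosedTopology β]
    (hf : ContinuousWithinAt f (Iio s) s) (hs : IsGLB {x | a ≤ x ∧ b ≤ f x} s) (has : a < s) :
    f s ≤ b := by
  have : (𝓝[<] s).NeBot := nhdsLT_neBot_of_exists_lt ⟨a, has⟩
  refine le_of_tendsto hf ?_
  filter_upwards [Ioo_mem_nhdsLT has] with x ⟨hax, hxs⟩
  by_contra! hbx
  exact hxs.not_ge (hs.1 ⟨hax.le, hbx.le⟩)

theorem apply_eq_of_isGLB_superlevel [DenselyOrdered α] [LinearOrder β] [OrderClosedTopology β]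
    (hf : ContinuousOn f (Ici a)) (hs : IsGLB {x | a ≤ x ∧ b ≤ f x} s)
    (hne : {x | a ≤ x ∧ b ≤ f x}.Nonempty) (has : a < s) : f s = b := by
  have hfs : ContinuousAt f s := hf.continuousAt (Ici_mem_nhds has)
  exact (apply_le_of_isGLB_superlevel hfs.continuousWithinAt hs has).antisymm
    (le_apply_of_isGLB_superlevel hf hs hne)

end Superlevel

theorem tendsto_atTop_of_monotone_of_mul_abs_sub_le {h : ℝ → ℝ} {m : ℝ} (hm : 0 < m)
    (hmono : Monotone h) (hexp : ∀ x y, m * |x - y| ≤ |h x - h y|) : Tendsto h atTop atTop := by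
  have hlin : Tendsto (fun x => h 0 + m * x) atTop atTop :=
    tendsto_atTop_add_const_left _ _ (tendsto_id.const_mul_atTop hm)
  refine tendsto_atTop_mono' _ ?_ hlin
  filter_upwards [eventually_ge_atTop 0] with x hx
  have hgrowth := hexp x 0
  rw [sub_zero, abs_of_nonneg hx, abs_of_nonneg (sub_nonneg.2 (hmono hx))] at hgrowth
  linarith

theorem reflSet_nonempty {h : ℝ → ℝ} (hlim : Tendsto h atTop atTop) (N : ℕ) (X : Fin N → ℝ) :
    (reflSet h N X).Nonempty := by
  have hterms : ∀ᶠ x in atTop, ∀ i, 0 ≤ h (x + X i) := eventually_all.2 fun i =>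
    (hlim.comp (tendsto_atTop_add_const_right _ (X i) tendsto_id)).eventually_ge_atTop 0
  obtain ⟨x, hx, hhx⟩ := ((eventually_ge_atTop 0).and hterms).exists
  exact ⟨x, hx, mul_nonneg (by positivity) (sum_nonneg fun i _ => hhx i)⟩

theorem isGLB_Lrefl {h : ℝ → ℝ} {N : ℕ} {X : Fin N → ℝ} (hne : (reflSet h N X).Nonempty) :
    IsGLB (reflSet h N X) (Lrefl h N X) :=
  isGLB_csInf hne ⟨0, fun _ hx => hx.1⟩

theorem constraint_saturated_of_Lrefl_pos_general {h : ℝ → ℝ} (hcont : Continuous h) {N : ℕ}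
    {X : Fin N → ℝ} (hne : (reflSet h N X).Nonempty) (hpos : 0 < Lrefl h N X) :
    (1 / (N : ℝ)) * ∑ i, h (Lrefl h N X + X i) = 0 := by
  have havg : Continuous fun x => (1 / (N : ℝ)) * ∑ i, h (x + X i) := by fun_prop
  have hsat := apply_eq_of_isGLB_superlevel havg.continuousOn (isGLB_Lrefl hne)
  exact hsat hne hpos

theorem constraint_saturated_of_Lrefl_pos
    (h : ℝ → ℝ) (m M : ℝ) (hm : 0 < m) (hmM : m ≤ M)
    (hmono : Monotone h)
    (hbilip : ∀ x y : ℝ, m * |x - y| ≤ |h x - h y| ∧ |h x - h y| ≤ M * |x - y|)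
    (N : ℕ) (hN : 1 ≤ N) (X : Fin N → ℝ)
    (hpos : 0 < Lrefl h N X) :
    (1 / (N : ℝ)) * ∑ i, h (Lrefl h N X + X i) = 0 := by
  have hlim : Tendsto h atTop atTop :=
    tendsto_atTop_of_monotone_of_mul_abs_sub_le hm hmono fun x y => (hbilip x y).1
  have hcont : Continuous h := (LipschitzWith.of_dist_le' fun x y => (hbilip x y).2).continuous
  exact constraint_saturated_of_Lrefl_pos_general hcont (reflSet_nonempty hlim N X) hpos
end

section
/- Let h : ℝ → ℝ be nondecreasing and bi-Lipschitz with constants 0 < m ≤ M. For every N ≥ 1 and all X, Y ∈ ℝ^N, |L(X) − L(Y)| ≤ (M/m)·(1/N)·∑_{j=1}^N |X^j − Y^j|. -/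
open Finset

/-! Put `S_X(x) = (1/N)·∑ᵢ h(x + Xⁱ)`, so that `L(X)` is the first `x ≥ 0` at which `S_X` is
nonnegative. Every `S_X` inherits the slope bound `≥ m` from `h`, while `S_X` and `S_Y` differ by at
most `ε = M·(1/N)·∑ⱼ |Xʲ - Yʲ|`. Once `S_Y` is nonnegative, `S_X` is at least `-ε`, and it gains `ε`
within a further distance `ε / m`; hence the two first times are within `ε / m` of each other. -/

/-- The first time `x ≥ 0` at which `f` is nonnegative, encoded as an infimum; it has the junk value
`0` if `f` is negative on `[0, ∞)`. The reflection operator is this time for an average of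
translates of `h`. -/
noncomputable def firstNonneg (f : ℝ → ℝ) : ℝ :=
  sInf {x | 0 ≤ x ∧ 0 ≤ f x}

section FirstNonneg

variable {f g : ℝ → ℝ} {c ε : ℝ}

lemma firstNonneg_le {x : ℝ} (hx : 0 ≤ x) (hfx : 0 ≤ f x) : firstNonneg f ≤ x :=
  csInf_le ⟨0, fun _ hy => hy.1⟩ ⟨hx, hfx⟩

lemma add_mul_le_of_monotoneOn_sub_mul (hf : MonotoneOn (fun x => f x - c * x) (Set.Ici 0))
    {x d : ℝ} (hx : 0 ≤ x) (hd : 0 ≤ d) : f x + c * d ≤ f (x + d) := by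
  have hmono : f x - c * x ≤ f (x + d) - c * (x + d) :=
    hf hx (add_nonneg hx hd) (le_add_of_nonneg_right hd)
  linarith

lemma exists_nonneg_of_monotoneOn_sub_mul (hc : 0 < c)
    (hf : MonotoneOn (fun x => f x - c * x) (Set.Ici 0)) : ∃ x, 0 ≤ x ∧ 0 ≤ f x := by
  have hd : 0 ≤ |f 0| / c := by positivity
  refine ⟨|f 0| / c, hd, ?_⟩
  calc
    0 ≤ f 0 + |f 0| := by linarith [neg_abs_le (f 0)]
    _ = f 0 + c * (|f 0| / c) := by rw [mul_div_cancel₀ _ hc.ne']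
    _ ≤ f (0 + |f 0| / c) := add_mul_le_of_monotoneOn_sub_mul hf le_rfl hd
    _ = f (|f 0| / c) := by rw [zero_add]

lemma firstNonneg_le_add_div (hc : 0 < c) (hε : 0 ≤ ε)
    (hf : MonotoneOn (fun x => f x - c * x) (Set.Ici 0)) (hg : ∃ x, 0 ≤ x ∧ 0 ≤ g x)
    (hgf : ∀ x, 0 ≤ x → g x ≤ f x + ε) : firstNonneg f ≤ firstNonneg g + ε / c := by
  have hd : 0 ≤ ε / c := by positivity
  rw [← sub_le_iff_le_add]
  refine le_csInf hg fun x ⟨hx, hgx⟩ => ?_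
  rw [sub_le_iff_le_add]
  refine firstNonneg_le (add_nonneg hx hd) ?_
  calc
    0 ≤ f x + ε := hgx.trans (hgf x hx)
    _ = f x + c * (ε / c) := by rw [mul_div_cancel₀ _ hc.ne']
    _ ≤ f (x + ε / c) := add_mul_le_of_monotoneOn_sub_mul hf hx hd

lemma abs_firstNonneg_sub_le_div (hc : 0 < c)
    (hf : MonotoneOn (fun x => f x - c * x) (Set.Ici 0))
    (hg : MonotoneOn (fun x => g x - c * x) (Set.Ici 0))
    (hfg : ∀ x, 0 ≤ x → |f x - g x| ≤ ε) : |firstNonneg f - firstNonneg g| ≤ ε / c := by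
  have hε : 0 ≤ ε := (abs_nonneg _).trans (hfg 0 le_rfl)
  rw [abs_sub_le_iff, sub_le_iff_le_add', sub_le_iff_le_add']
  constructor
  · refine firstNonneg_le_add_div hc hε hf (exists_nonneg_of_monotoneOn_sub_mul hc hg) ?_
    exact fun x hx => by linarith [(abs_sub_le_iff.1 (hfg x hx)).2]
  · refine firstNonneg_le_add_div hc hε hg (exists_nonneg_of_monotoneOn_sub_mul hc hf) ?_
    exact fun x hx => by linarith [(abs_sub_le_iff.1 (hfg x hx)).1]

end FirstNonneg

lemma monotone_sub_mul_of_mul_abs_sub_le {h : ℝ → ℝ} {c : ℝ} (hmono : Monotone h)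
    (hexp : ∀ x y, c * |x - y| ≤ |h x - h y|) : Monotone fun x => h x - c * x := by
  intro x y hxy
  have hslope : c * (y - x) ≤ h y - h x := by
    simpa only [abs_of_nonneg (sub_nonneg.2 hxy), abs_of_nonneg (sub_nonneg.2 (hmono hxy))]
      using hexp y x
  change h x - c * x ≤ h y - c * y
  linarith

section Average

open scoped BigOperators NNReal

variable {ι : Type*} {s : Finset ι}

lemma monotone_expect_comp_add_sub_mul {h : ℝ → ℝ} {c : ℝ}
    (hh : Monotone fun x => h x - c * x) (hs : s.Nonempty) (X : ι → ℝ) :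
    Monotone fun x => 𝔼 i ∈ s, h (x + X i) - c * x := by
  intro x y hxy
  have hterm : ∀ i ∈ s, h (x + X i) - c * x ≤ h (y + X i) - c * y := fun i _ => by
    have hi : h (x + X i) - c * (x + X i) ≤ h (y + X i) - c * (y + X i) :=
      hh (add_le_add_left hxy (X i))
    linarith
  simpa only [expect_sub_distrib, expect_const hs] using expect_le_expect hterm

lemma abs_expect_sub_expect_le_of_lipschitzWith {α : Type*} [PseudoMetricSpace α] {K : ℝ≥0}
    {h : α → ℝ} (hh : LipschitzWith K h) (x y : ι → α) :
    |𝔼 i ∈ s, h (x i) - 𝔼 i ∈ s, h (y i)| ≤ K * 𝔼 i ∈ s, dist (x i) (y i) :=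
  calc
    |𝔼 i ∈ s, h (x i) - 𝔼 i ∈ s, h (y i)| = |𝔼 i ∈ s, (h (x i) - h (y i))| := by
      rw [expect_sub_distrib]
    _ ≤ 𝔼 i ∈ s, |h (x i) - h (y i)| := abs_expect_le _ _
    _ ≤ 𝔼 i ∈ s, K * dist (x i) (y i) :=
      expect_le_expect fun i _ => hh.dist_le_mul (x i) (y i)
    _ = K * 𝔼 i ∈ s, dist (x i) (y i) := (mul_expect _ _ _).symm

lemma one_div_mul_sum_eq_expect {N : ℕ} (a : Fin N → ℝ) :
    (1 / (N : ℝ)) * ∑ i, a i = 𝔼 i, a i := by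
  rw [Fintype.expect_eq_sum_div_card, Fintype.card_fin, one_div_mul_eq_div]

lemma Lrefl_eq_firstNonneg_expect (h : ℝ → ℝ) {N : ℕ} (X : Fin N → ℝ) :
    Lrefl h N X = firstNonneg fun x => 𝔼 i, h (x + X i) := by
  simp only [Lrefl, reflSet, firstNonneg, one_div_mul_sum_eq_expect]

end Average

theorem Lrefl_lipschitz
    (h : ℝ → ℝ) (m M : ℝ) (hm : 0 < m) (hmM : m ≤ M)
    (hmono : Monotone h)
    (hbilip : ∀ x y : ℝ, m * |x - y| ≤ |h x - h y| ∧ |h x - h y| ≤ M * |x - y|)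
    (N : ℕ) (hN : 1 ≤ N) (X Y : Fin N → ℝ) :
    |Lrefl h N X - Lrefl h N Y| ≤ (M / m) * ((1 / (N : ℝ)) * ∑ j, |X j - Y j|) := by
  have : NeZero N := ⟨Nat.one_le_iff_ne_zero.1 hN⟩
  have hM : 0 ≤ M := hm.le.trans hmM
  have hslope : Monotone fun x => h x - m * x :=
    monotone_sub_mul_of_mul_abs_sub_le hmono fun x y => (hbilip x y).1
  have hlip : LipschitzWith M.toNNReal h := .of_dist_le' fun x y => (hbilip x y).2
  have hmean (Z : Fin N → ℝ) :
      MonotoneOn (fun x => expect univ (fun i => h (x + Z i)) - m * x) (Set.Ici 0) :=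
    (monotone_expect_comp_add_sub_mul hslope univ_nonempty Z).monotoneOn _
  rw [Lrefl_eq_firstNonneg_expect, Lrefl_eq_firstNonneg_expect, one_div_mul_sum_eq_expect,
    div_mul_eq_mul_div]
  refine abs_firstNonneg_sub_le_div hm (hmean X) (hmean Y) fun x _ => ?_
  simpa only [dist_add_left, Real.dist_eq, Real.coe_toNNReal M hM] using
    abs_expect_sub_expect_le_of_lipschitzWith hlip (fun i => x + X i) fun i => x + Y i
end

section
/- Let h : ℝ → ℝ be nondecreasing and bi-Lipschitz with constants 0 < m ≤ M, and set x₀ := inf{x ≥ 0 : h(x) ≥ 0}. Then x₀ is a well-defined (finite) nonnegative real, L(0,…,0) = x₀, and for every N ≥ 1 and X ∈ ℝ^N, 0 ≤ L(X) ≤ x₀ + (M/m)·(1/N)·∑_{j=1}^N |X^j|. -/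
open Finset

/-- `x₀ = inf {x ≥ 0 : h(x) ≥ 0}`. -/
noncomputable def xZero (h : ℝ → ℝ) : ℝ :=
  sInf {x : ℝ | 0 ≤ x ∧ 0 ≤ h x}

/-!
Shifting the argument up by `d ≥ 0` raises `h` by at least `m * d`, while perturbing it by `Xⁱ`
lowers `h` by at most `M * |Xⁱ|`. Hence, for every `a`, the shift `d = (M / m) * (1/N) ∑ |Xⁱ|`
compensates the perturbations on average: `h a ≤ (1/N) ∑ h (a + d + Xⁱ)`. Every `a ≥ 0` with
`h a ≥ 0` therefore gives a point `a + d` of `A(X)`; take the infimum over `a`.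
-/

section Expansion

variable {h : ℝ → ℝ} {m M : ℝ}

theorem mul_sub_le_image_sub_of_monotone (hmono : Monotone h)
    (hanti : ∀ x y, m * |x - y| ≤ |h x - h y|) {x y : ℝ} (hxy : x ≤ y) :
    m * (y - x) ≤ h y - h x := by
  simpa only [abs_of_nonneg (sub_nonneg.2 hxy), abs_of_nonneg (sub_nonneg.2 (hmono hxy))]
    using hanti y x

theorem exists_nonneg_le_image_of_mul_sub_le (hm : 0 < m)
    (hexp : ∀ ⦃x y⦄, x ≤ y → m * (y - x) ≤ h y - h x) (c : ℝ) : ∃ x, 0 ≤ x ∧ c ≤ h x := by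
  have hx : 0 ≤ |c - h 0| / m := by positivity
  refine ⟨|c - h 0| / m, hx, ?_⟩
  have hgrow : |c - h 0| ≤ h (|c - h 0| / m) - h 0 := by
    simpa only [sub_zero, mul_div_cancel₀ _ hm.ne'] using hexp hx
  linarith [le_abs_self (c - h 0)]

theorem image_le_weighted_sum_image_add {ι : Type*} {s : Finset ι} {w : ι → ℝ} (hm : 0 < m)
    (hM : 0 ≤ M) (hexp : ∀ ⦃x y⦄, x ≤ y → m * (y - x) ≤ h y - h x)
    (hlip : ∀ x y, |h x - h y| ≤ M * |x - y|) (hw : ∀ i ∈ s, 0 ≤ w i) (hw₁ : ∑ i ∈ s, w i = 1)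
    (X : ι → ℝ) (a : ℝ) :
    h a ≤ ∑ i ∈ s, w i * h (a + M / m * ∑ j ∈ s, w j * |X j| + X i) := by
  set d := M / m * ∑ j ∈ s, w j * |X j| with hd
  have hd₀ : 0 ≤ d :=
    mul_nonneg (by positivity) (sum_nonneg fun i hi => mul_nonneg (hw i hi) (abs_nonneg _))
  have hmd : m * d = M * ∑ j ∈ s, w j * |X j| := by rw [hd]; field_simp
  have hshift : h a + m * d ≤ h (a + d) := by
    linarith [hexp (le_add_of_nonneg_right hd₀ : a ≤ a + d)]
  have hperturb (i : ι) : h (a + d) - M * |X i| ≤ h (a + d + X i) := by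
    have hdiff := hlip (a + d + X i) (a + d)
    rw [add_sub_cancel_left] at hdiff
    linarith [neg_le_of_abs_le hdiff]
  calc h a = ∑ i ∈ s, w i * (h a + m * d - M * |X i|) := by
        simp only [mul_sub, sum_sub_distrib, ← sum_mul, hw₁, hmd, mul_left_comm _ M, ← mul_sum]
        ring
    _ ≤ ∑ i ∈ s, w i * h (a + d + X i) := by
        gcongr with i hi
        · exact hw i hi
        · linarith [hperturb i]

end Expansion

section Reflection

variable {h : ℝ → ℝ} {N : ℕ} {X : Fin N → ℝ}

theorem xZero_nonneg : 0 ≤ xZero h :=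
  Real.sInf_nonneg fun _ hx => hx.1

theorem Lrefl_nonneg : 0 ≤ Lrefl h N X :=
  Real.sInf_nonneg fun _ hx => hx.1

theorem reflSet_const (hN : N ≠ 0) (c : ℝ) :
    reflSet h N (fun _ => c) = {x | 0 ≤ x ∧ 0 ≤ h (x + c)} := by
  ext x
  simp [reflSet, hN]

theorem Lrefl_zero (hN : N ≠ 0) : Lrefl h N (fun _ => 0) = xZero h := by
  simp only [Lrefl, xZero, reflSet_const hN, add_zero]

theorem Lrefl_le_xZero_add {d : ℝ} (hne : {x | 0 ≤ x ∧ 0 ≤ h x}.Nonempty)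
    (hadd : ∀ a, 0 ≤ a → 0 ≤ h a → a + d ∈ reflSet h N X) : Lrefl h N X ≤ xZero h + d := by
  have hbdd : BddBelow (reflSet h N X) := ⟨0, fun _ hx => hx.1⟩
  exact sub_le_iff_le_add.1 <| le_csInf hne fun a ha =>
    sub_le_iff_le_add.2 <| csInf_le hbdd (hadd a ha.1 ha.2)

theorem add_mem_reflSet {m M a : ℝ} (hN : N ≠ 0) (hm : 0 < m) (hM : 0 ≤ M)
    (hexp : ∀ ⦃x y⦄, x ≤ y → m * (y - x) ≤ h y - h x)
    (hlip : ∀ x y, |h x - h y| ≤ M * |x - y|) (ha : 0 ≤ a) (hha : 0 ≤ h a) :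
    a + M / m * (1 / (N : ℝ) * ∑ j, |X j|) ∈ reflSet h N X := by
  refine ⟨by positivity, hha.trans ?_⟩
  have hweights : ∑ _i : Fin N, 1 / (N : ℝ) = 1 := by simp [hN]
  simpa only [← mul_sum] using
    image_le_weighted_sum_image_add hm hM hexp hlip (fun _ _ => by positivity) hweights X a

end Reflection

theorem Lrefl_growth_bound
    (h : ℝ → ℝ) (m M : ℝ) (hm : 0 < m) (hmM : m ≤ M)
    (hmono : Monotone h)
    (hbilip : ∀ x y : ℝ, m * |x - y| ≤ |h x - h y| ∧ |h x - h y| ≤ M * |x - y|) :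
    ({x : ℝ | 0 ≤ x ∧ 0 ≤ h x}).Nonempty ∧ BddBelow {x : ℝ | 0 ≤ x ∧ 0 ≤ h x} ∧
      0 ≤ xZero h ∧
      (∀ N : ℕ, 1 ≤ N → Lrefl h N (fun _ => (0 : ℝ)) = xZero h) ∧
      ∀ (N : ℕ), 1 ≤ N → ∀ X : Fin N → ℝ,
        0 ≤ Lrefl h N X ∧
        Lrefl h N X ≤ xZero h + (M / m) * ((1 / (N : ℝ)) * ∑ j, |X j|) := by
  have hexp ⦃x y : ℝ⦄ (hxy : x ≤ y) : m * (y - x) ≤ h y - h x :=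
    mul_sub_le_image_sub_of_monotone hmono (fun x y => (hbilip x y).1) hxy
  have hlip (x y : ℝ) : |h x - h y| ≤ M * |x - y| := (hbilip x y).2
  have hne : {x | 0 ≤ x ∧ 0 ≤ h x}.Nonempty := exists_nonneg_le_image_of_mul_sub_le hm hexp 0
  refine ⟨hne, ⟨0, fun _ hx => hx.1⟩, xZero_nonneg,
    fun N hN => Lrefl_zero (Nat.one_le_iff_ne_zero.1 hN), fun N hN X => ⟨Lrefl_nonneg, ?_⟩⟩
  exact Lrefl_le_xZero_add hne fun a ha hha =>
    add_mem_reflSet (Nat.one_le_iff_ne_zero.1 hN) hm (hm.le.trans hmM) hexp hlip ha hha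
end

section
/- Let h : ℝ → ℝ be nondecreasing and bi-Lipschitz with constants 0 < m ≤ M, and let μ and ν be Borel probability measures on ℝ with finite first moments, with unique roots x*(μ) and x*(ν) of H(·, μ) and H(·, ν) respectively. Then |Λ(μ) − Λ(ν)| ≤ |x*(μ) − x*(ν)| ≤ (1/m)·|∫ h(x*(μ) + y) dν(y)| = (1/m)·|H(x*(μ), ν) − H(x*(μ), μ)|. -/
open MeasureTheory

/-- `Λ(μ) = inf {x ≥ 0 : ∫ h(x + y) dμ(y) ≥ 0}`, the reflection-in-law operator. -/
noncomputable def LambdaRefl (h : ℝ → ℝ) (μ : Measure ℝ) : ℝ :=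
  sInf {x : ℝ | 0 ≤ x ∧ 0 ≤ ∫ y, h (x + y) ∂μ}

/-!
Averaging translates of `h` against a probability measure preserves the lower growth bound
`m * (y - x) ≤ h y - h x`, so `H(·, μ)` grows at rate at least `m`. Hence it is nonnegative exactly
to the right of its root, which gives `Λ(μ) = max (x*(μ)) 0`, and truncation at `0` is
`1`-Lipschitz. The same growth of `H(·, ν)` between `x*(μ)` and its root `x*(ν)` bounds the
distance of the roots.
-/

/-- Strong monotonicity of a real function with modulus `m`: it increases at rate at least `m`.
The sign of `m` is not part of the definition. -/
def IsStronglyMonotone (m : ℝ) (f : ℝ → ℝ) : Prop :=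
  ∀ ⦃x y : ℝ⦄, x ≤ y → m * (y - x) ≤ f y - f x

/-- The function `H(x, μ) = ∫ h(x + y) dμ(y)` whose root determines the reflection. As a Bochner
integral it is `0` wherever the translate of `h` is not integrable. -/
noncomputable def shiftedMean (h : ℝ → ℝ) (μ : Measure ℝ) (x : ℝ) : ℝ :=
  ∫ y, h (x + y) ∂μ

theorem integrable_comp_of_lipschitzWith {α E F : Type*} [MeasurableSpace α] {μ : Measure α}
    [IsFiniteMeasure μ] [NormedAddCommGroup E] [NormedAddCommGroup F] {K : NNReal} {f : E → F}
    {g : α → E} (hf : LipschitzWith K f) (hg : Integrable g μ) :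
    Integrable (fun a => f (g a)) μ := by
  have hcentered : LipschitzWith K fun z => f z - f 0 :=
    LipschitzWith.of_dist_le_mul fun z w => by
      simpa only [dist_sub_right] using hf.dist_le_mul z w
  have hcomp : Integrable (fun a => f (g a) - f 0) μ :=
    memLp_one_iff_integrable.1 <|
      hcentered.comp_memLp (sub_self _) (memLp_one_iff_integrable.2 hg)
  simpa only [Pi.add_def, sub_add_cancel] using hcomp.add (integrable_const (f 0))

theorem sInf_setOf_le_and_le_eq_max {α β : Type*} [ConditionallyCompleteLinearOrder α]
    [Preorder β] {f : α → β} (hf : StrictMono f) (a r : α) :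
    sInf {x | a ≤ x ∧ f r ≤ f x} = max r a := by
  have hset : {x | a ≤ x ∧ f r ≤ f x} = Set.Ici (max r a) := by
    ext x
    simp only [Set.mem_ofPred_eq, Set.mem_Ici, max_le_iff, hf.le_iff_le, and_comm]
  rw [hset, csInf_Ici]

namespace IsStronglyMonotone

variable {m : ℝ} {f : ℝ → ℝ}

theorem of_monotone (hf : Monotone f) (hlower : ∀ x y : ℝ, m * |x - y| ≤ |f x - f y|) :
    IsStronglyMonotone m f := fun x y hxy => by
  simpa only [abs_of_nonneg (sub_nonneg.2 hxy), abs_of_nonneg (sub_nonneg.2 (hf hxy))]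
    using hlower y x

theorem strictMono (hf : IsStronglyMonotone m f) (hm : 0 < m) : StrictMono f := fun _ _ hxy =>
  sub_pos.1 <| (mul_pos hm (sub_pos.2 hxy)).trans_le (hf hxy.le)

theorem mul_abs_sub_le (hf : IsStronglyMonotone m f) (x y : ℝ) :
    m * |x - y| ≤ |f x - f y| := by
  wlog hyx : y ≤ x generalizing x y
  · simpa only [abs_sub_comm] using this y x (le_of_not_ge hyx)
  calc m * |x - y| = m * (x - y) := by rw [abs_of_nonneg (sub_nonneg.2 hyx)]
    _ ≤ f x - f y := hf hyx
    _ ≤ |f x - f y| := le_abs_self _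

theorem abs_sub_root_le (hf : IsStronglyMonotone m f) (hm : 0 < m) {r : ℝ} (hr : f r = 0)
    (x : ℝ) : |x - r| ≤ (1 / m) * |f x| := by
  rw [one_div, le_inv_mul_iff₀ hm]
  simpa only [hr, sub_zero] using hf.mul_abs_sub_le x r

end IsStronglyMonotone

theorem isStronglyMonotone_shiftedMean {m : ℝ} {f : ℝ → ℝ} {μ : Measure ℝ} [IsFiniteMeasure μ]
    (hf : IsStronglyMonotone m f) (hint : ∀ x, Integrable (fun y => f (x + y)) μ) :
    IsStronglyMonotone (m * μ.real Set.univ) (shiftedMean f μ) := fun a b hab =>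
  calc m * μ.real Set.univ * (b - a) = ∫ _y, m * (b - a) ∂μ := by
        rw [integral_const, smul_eq_mul]; ring
    _ ≤ ∫ y, (f (b + y) - f (a + y)) ∂μ :=
        integral_mono (integrable_const _) ((hint b).sub (hint a)) fun y => by
          simpa only [add_sub_add_right_eq_sub] using hf (add_le_add_left hab y)
    _ = shiftedMean f μ b - shiftedMean f μ a :=
        integral_sub (hint b) (hint a)

theorem LambdaRefl_eq_max_of_root {h : ℝ → ℝ} {μ : Measure ℝ}
    (hH : StrictMono (shiftedMean h μ)) {r : ℝ} (hr : shiftedMean h μ r = 0) :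
    LambdaRefl h μ = max r 0 := by
  rw [← sInf_setOf_le_and_le_eq_max hH, hr]
  rfl

theorem LambdaRefl_roots_estimate_general {h : ℝ → ℝ} {m : ℝ} (hm : 0 < m)
    (hh : IsStronglyMonotone m h) {μ ν : Measure ℝ} [IsProbabilityMeasure μ]
    [IsProbabilityMeasure ν] (hμ : ∀ x, Integrable (fun y => h (x + y)) μ)
    (hν : ∀ x, Integrable (fun y => h (x + y)) ν) {xμ xν : ℝ}
    (hrootμ : shiftedMean h μ xμ = 0) (hrootν : shiftedMean h ν xν = 0) :
    |LambdaRefl h μ - LambdaRefl h ν| ≤ |xμ - xν| ∧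
    |xμ - xν| ≤ (1 / m) * |shiftedMean h ν xμ| ∧
    |shiftedMean h ν xμ| = |shiftedMean h ν xμ - shiftedMean h μ xμ| := by
  have hHμ : IsStronglyMonotone m (shiftedMean h μ) := by
    simpa only [probReal_univ, mul_one] using isStronglyMonotone_shiftedMean hh hμ
  have hHν : IsStronglyMonotone m (shiftedMean h ν) := by
    simpa only [probReal_univ, mul_one] using isStronglyMonotone_shiftedMean hh hν
  refine ⟨?_, hHν.abs_sub_root_le hm hrootν xμ, by rw [hrootμ, sub_zero]⟩
  rw [LambdaRefl_eq_max_of_root (hHμ.strictMono hm) hrootμ,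
    LambdaRefl_eq_max_of_root (hHν.strictMono hm) hrootν]
  exact abs_max_sub_max_le_abs xμ xν 0

theorem LambdaRefl_roots_estimate
    (h : ℝ → ℝ) (m M : ℝ) (hm : 0 < m) (hmM : m ≤ M)
    (hmono : Monotone h)
    (hbilip : ∀ x y : ℝ, m * |x - y| ≤ |h x - h y| ∧ |h x - h y| ≤ M * |x - y|)
    (μ ν : Measure ℝ) [IsProbabilityMeasure μ] [IsProbabilityMeasure ν]
    (hμ : Integrable (fun y : ℝ => y) μ) (hν : Integrable (fun y : ℝ => y) ν)
    (xμ xν : ℝ)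
    (hrootμ : (∫ y, h (xμ + y) ∂μ) = 0) (hrootν : (∫ y, h (xν + y) ∂ν) = 0) :
    |LambdaRefl h μ - LambdaRefl h ν| ≤ |xμ - xν| ∧
    |xμ - xν| ≤ (1 / m) * |∫ y, h (xμ + y) ∂ν| ∧
    |∫ y, h (xμ + y) ∂ν| = |(∫ y, h (xμ + y) ∂ν) - ∫ y, h (xμ + y) ∂μ| := by
  have hLip : LipschitzWith M.toNNReal h := LipschitzWith.of_dist_le' fun x y => (hbilip x y).2
  exact LambdaRefl_roots_estimate_general hm (.of_monotone hmono fun x y => (hbilip x y).1)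
    (fun x => integrable_comp_of_lipschitzWith hLip ((integrable_const x).add hμ))
    (fun x => integrable_comp_of_lipschitzWith hLip ((integrable_const x).add hν)) hrootμ hrootν
end

section
/- Let h : ℝ → ℝ be nondecreasing and bi-Lipschitz with constants 0 < m ≤ M, let μ and ν be Borel probability measures on ℝ with finite first moments, and let π be any Borel probability measure on ℝ × ℝ whose first marginal is μ and whose second marginal is ν and such that (y, z) ↦ |y − z| is π-integrable. Then |Λ(μ) − Λ(ν)| ≤ |x*(μ) − x*(ν)| ≤ (M/m)·∫ |y − z| dπ(y, z); in particular Λ is (M/m)-Lipschitz with respect to the Wasserstein-1 distance. -/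
open MeasureTheory

/-!
Averaging over a probability measure preserves strong monotonicity, so `x ↦ ∫ h(x + y) dμ(y)` grows
at rate at least `m`. Hence its nonnegativity set is the ray `[x*(μ), ∞)`, which makes `Λ(μ)` the
positive part of `x*(μ)`, and a perturbation of size `ε` of the function moves its root by at most
`ε / m`. Passing from `μ` to `ν` at a fixed `x` costs `ε = M ∫ |y - z| dπ` because `h` is
`M`-Lipschitz.
-/

open scoped ENNReal NNReal

section Lipschitz

variable {K : ℝ≥0}

theorem memLp_comp_of_lipschitzWith {Ω E F : Type*} [MeasurableSpace Ω]
    [NormedAddCommGroup E] [NormedAddCommGroup F] {μ : Measure Ω} [IsFiniteMeasure μ] {p : ℝ≥0∞}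
    {f : E → F} {X : Ω → E} (hf : LipschitzWith K f) (hX : MemLp X p μ) :
    MemLp (fun ω ↦ f (X ω)) p μ := by
  have hf₀ : LipschitzWith K fun x ↦ f x - f 0 := .of_dist_le_mul fun x y ↦ by
    simpa only [dist_sub_right] using hf.dist_le_mul x y
  simpa only [Function.comp_def, Pi.add_def, sub_add_cancel] using
    (hf₀.comp_memLp (sub_self _) hX).add (memLp_const (f 0))

theorem norm_integral_fst_sub_integral_snd_le {X E : Type*} [PseudoMetricSpace X]
    [MeasurableSpace X] [NormedAddCommGroup E] [NormedSpace ℝ E] {f : X → E}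
    {π : Measure (X × X)} (hf : LipschitzWith K f) (hfst : Integrable f π.fst)
    (hsnd : Integrable f π.snd) (hdist : Integrable (fun p : X × X ↦ dist p.1 p.2) π) :
    ‖(∫ x, f x ∂π.fst) - ∫ x, f x ∂π.snd‖ ≤ K * ∫ p, dist p.1 p.2 ∂π := by
  have hfst' : Integrable (fun p ↦ f p.1) π := hfst.comp_measurable measurable_fst
  have hsnd' : Integrable (fun p ↦ f p.2) π := hsnd.comp_measurable measurable_snd
  calc ‖(∫ x, f x ∂π.fst) - ∫ x, f x ∂π.snd‖
      = ‖∫ p, (f p.1 - f p.2) ∂π‖ := by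
        rw [Measure.fst, Measure.snd, integral_map measurable_fst.aemeasurable hfst.1,
          integral_map measurable_snd.aemeasurable hsnd.1, integral_sub hfst' hsnd']
    _ ≤ ∫ p, K * dist p.1 p.2 ∂π :=
        norm_integral_le_of_norm_le (hdist.const_mul _)
          (.of_forall fun p ↦ by simpa only [dist_eq_norm] using hf.dist_le_mul p.1 p.2)
    _ = K * ∫ p, dist p.1 p.2 ∂π := integral_const_mul _ _

end Lipschitz

/-- Strong monotonicity with modulus `m`: all slopes are at least `m`. Unlike a lower bound on
`|f a - f b|`, this passes directly to averages of `f`. -/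
def StronglyMonotone (m : ℝ) (f : ℝ → ℝ) : Prop :=
  ∀ ⦃a b : ℝ⦄, a ≤ b → m * (b - a) ≤ f b - f a

namespace StronglyMonotone

variable {m : ℝ} {f : ℝ → ℝ}

theorem of_monotone_of_mul_abs_sub_le (hf : Monotone f)
    (hm : ∀ x y, m * |x - y| ≤ |f x - f y|) : StronglyMonotone m f := fun a b hab ↦ by
  simpa only [abs_of_nonneg (sub_nonneg.2 hab), abs_of_nonneg (sub_nonneg.2 (hf hab))]
    using hm b a

theorem mul_abs_sub_le (hf : StronglyMonotone m f) (a b : ℝ) :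
    m * |a - b| ≤ |f a - f b| := by
  wlog hba : b ≤ a generalizing a b
  · simpa only [abs_sub_comm] using this b a (le_of_not_ge hba)
  rw [abs_of_nonneg (sub_nonneg.2 hba)]
  exact (hf hba).trans (le_abs_self _)

theorem mul_abs_sub_le_of_eq (hf : StronglyMonotone m f) {g : ℝ → ℝ} {a b : ℝ}
    (hab : f a = g b) : m * |a - b| ≤ |f b - g b| := by
  simpa only [hab, abs_sub_comm] using hf.mul_abs_sub_le a b

theorem strictMono (hf : StronglyMonotone m f) (hm : 0 < m) : StrictMono f := fun _ _ hab ↦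
  sub_pos.1 ((mul_pos hm (sub_pos.2 hab)).trans_le (hf hab.le))

end StronglyMonotone

/-- The function `x ↦ H(x, μ) = ∫ h(x + y) dμ(y)`, whose root is `x*(μ)`. -/
noncomputable def shiftMean (h : ℝ → ℝ) (μ : Measure ℝ) (x : ℝ) : ℝ :=
  ∫ y, h (x + y) ∂μ

theorem integrable_shift_of_lipschitzWith {K : ℝ≥0} {h : ℝ → ℝ} {μ : Measure ℝ}
    [IsFiniteMeasure μ] (hh : LipschitzWith K h) (hμ : Integrable (fun y ↦ y) μ) (x : ℝ) :
    Integrable (fun y ↦ h (x + y)) μ :=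
  memLp_one_iff_integrable.1 <| memLp_comp_of_lipschitzWith hh <|
    memLp_one_iff_integrable.2 <| (integrable_const x).add hμ

theorem abs_shiftMean_fst_sub_shiftMean_snd_le {K : ℝ≥0} {h : ℝ → ℝ}
    {π : Measure (ℝ × ℝ)} [IsFiniteMeasure π] (hh : LipschitzWith K h)
    (hfst : Integrable (fun y ↦ y) π.fst) (hsnd : Integrable (fun y ↦ y) π.snd)
    (hdist : Integrable (fun p : ℝ × ℝ ↦ |p.1 - p.2|) π) (x : ℝ) :
    |shiftMean h π.fst x - shiftMean h π.snd x| ≤ K * ∫ p, |p.1 - p.2| ∂π := by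
  have hshift : LipschitzWith K fun y ↦ h (x + y) := by
    simpa only [mul_one, Function.comp_def] using hh.comp (isometry_add_left x).lipschitz
  exact norm_integral_fst_sub_integral_snd_le hshift
    (integrable_shift_of_lipschitzWith hh hfst x) (integrable_shift_of_lipschitzWith hh hsnd x)
    hdist

theorem stronglyMonotone_shiftMean {m : ℝ} {h : ℝ → ℝ} {μ : Measure ℝ} [IsProbabilityMeasure μ]
    (hh : StronglyMonotone m h) (hint : ∀ x, Integrable (fun y ↦ h (x + y)) μ) :
    StronglyMonotone m (shiftMean h μ) := by
  intro a b hab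
  calc m * (b - a) = ∫ _, m * (b - a) ∂μ := by simp
    _ ≤ ∫ y, (h (b + y) - h (a + y)) ∂μ :=
        integral_mono (integrable_const _) ((hint b).sub (hint a)) fun y ↦ by
          simpa only [add_sub_add_right_eq_sub] using hh (add_le_add_left hab y)
    _ = shiftMean h μ b - shiftMean h μ a := integral_sub (hint b) (hint a)

theorem LambdaRefl_eq_max {h : ℝ → ℝ} {μ : Measure ℝ} {r : ℝ}
    (hmono : StrictMono (shiftMean h μ)) (hr : shiftMean h μ r = 0) :
    LambdaRefl h μ = max r 0 := by
  have hset : {x | 0 ≤ x ∧ 0 ≤ shiftMean h μ x} = Set.Ici (max r 0) := by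
    ext x
    rw [Set.mem_ofPred_eq, ← hr, hmono.le_iff_le, Set.mem_Ici, max_le_iff, and_comm]
  exact (congrArg sInf hset).trans csInf_Ici

theorem LambdaRefl_wasserstein_lipschitz
    (h : ℝ → ℝ) (m M : ℝ) (hm : 0 < m) (hmM : m ≤ M)
    (hmono : Monotone h)
    (hbilip : ∀ x y : ℝ, m * |x - y| ≤ |h x - h y| ∧ |h x - h y| ≤ M * |x - y|)
    (μ ν : Measure ℝ) [IsProbabilityMeasure μ] [IsProbabilityMeasure ν]
    (hμ : Integrable (fun y : ℝ => y) μ) (hν : Integrable (fun y : ℝ => y) ν)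
    (xμ xν : ℝ)
    (hrootμ : (∫ y, h (xμ + y) ∂μ) = 0) (hrootν : (∫ y, h (xν + y) ∂ν) = 0)
    (π : Measure (ℝ × ℝ)) [IsProbabilityMeasure π]
    (hfst : π.map Prod.fst = μ) (hsnd : π.map Prod.snd = ν)
    (hπint : Integrable (fun p : ℝ × ℝ => |p.1 - p.2|) π) :
    |LambdaRefl h μ - LambdaRefl h ν| ≤ |xμ - xν| ∧
    |xμ - xν| ≤ (M / m) * ∫ p, |p.1 - p.2| ∂π := by
  have hlip : LipschitzWith M.toNNReal h := .of_dist_le' fun x y ↦ (hbilip x y).2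
  have hh : StronglyMonotone m h := .of_monotone_of_mul_abs_sub_le hmono fun x y ↦ (hbilip x y).1
  have hHμ : StronglyMonotone m (shiftMean h μ) :=
    stronglyMonotone_shiftMean hh (integrable_shift_of_lipschitzWith hlip hμ)
  have hHν : StronglyMonotone m (shiftMean h ν) :=
    stronglyMonotone_shiftMean hh (integrable_shift_of_lipschitzWith hlip hν)
  constructor
  · rw [LambdaRefl_eq_max (hHμ.strictMono hm) hrootμ, LambdaRefl_eq_max (hHν.strictMono hm) hrootν]
    exact abs_max_sub_max_le_abs xμ xν 0
  · subst hfst hsnd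
    rw [div_mul_eq_mul_div, le_div_iff₀' hm]
    calc m * |xμ - xν|
        ≤ |shiftMean h π.fst xν - shiftMean h π.snd xν| :=
          hHμ.mul_abs_sub_le_of_eq (hrootμ.trans hrootν.symm)
      _ ≤ M.toNNReal * ∫ p, |p.1 - p.2| ∂π :=
          abs_shiftMean_fst_sub_shiftMean_snd_le hlip hμ hν hπint xν
      _ = M * ∫ p, |p.1 - p.2| ∂π := by rw [Real.coe_toNNReal M (hm.le.trans hmM)]
end
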